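/- arXiv:2010.12045 — 7 statements merged into one kernel-verified Lean document; each statement's English description precedes it below -/
import Mathlib

section
/- For the regular hyperbolic helical polygon, for every k ∈ ℤ the curvature angle satisfies −T_k ∘₋ T_{k+1} = 1 + 2a² sinh²(l/2) = cosh(ρ₀), where ρ₀ = 2 arcsinh(a sinh(l/2)); in particular the value is independent of k. -/
noncomputable section

/-- The Minkowski pseudo-scalar product on ℝ^{1,2} = ℝ³. -/
def mdot (a b : Fin 3 → ℝ) : ℝ := -(a 0 * b 0) + a 1 * b 1 + a 2 * b 2

/-- Tangent vectors of the regular hyperbolic helical polygon with side length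
`l` and torsion parameter `b` (with `a = √(1 + b²)`). -/
def hhpT (l b : ℝ) (k : ℤ) : Fin 3 → ℝ :=
  ![Real.sqrt (1 + b ^ 2) * Real.cosh (l / 2 + k * l),
    Real.sqrt (1 + b ^ 2) * Real.sinh (l / 2 + k * l), b]

/-- The curvature angle of the regular hyperbolic helical polygon:
`−T_k ∘₋ T_{k+1} = 1 + 2a² sinh²(l/2) = cosh ρ₀`, with
`ρ₀ = 2 arcsinh(a sinh(l/2))`, independently of `k`. -/
theorem hhp_curvature_angle (l b : ℝ) (hl : 0 < l) (hb : 0 < b) :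
    ∀ k : ℤ,
      -(mdot (hhpT l b k) (hhpT l b (k + 1))) =
          1 + 2 * (Real.sqrt (1 + b ^ 2)) ^ 2 * (Real.sinh (l / 2)) ^ 2 ∧
      -(mdot (hhpT l b k) (hhpT l b (k + 1))) =
          Real.cosh (2 * Real.arsinh (Real.sqrt (1 + b ^ 2) * Real.sinh (l / 2))) := by
  intro k
  have ha : (Real.sqrt (1 + b ^ 2)) ^ 2 = 1 + b ^ 2 := Real.sq_sqrt (by positivity)
  have h1 : -(mdot (hhpT l b k) (hhpT l b (k + 1))) =
      1 + 2 * (Real.sqrt (1 + b ^ 2)) ^ 2 * (Real.sinh (l / 2)) ^ 2 := by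
    have e : l / 2 + ((k + 1 : ℤ) : ℝ) * l = (l / 2 + k * l) + l := by push_cast; ring
    have hc : Real.cosh l = 1 + 2 * Real.sinh (l / 2) ^ 2 := by
      have h := Real.cosh_two_mul (l / 2)
      rw [show 2 * (l / 2) = l by ring, Real.cosh_sq] at h
      linarith
    have hu := Real.cosh_sq (l / 2 + k * l)
    simp only [mdot, hhpT, e, Real.cosh_add _ l, Real.sinh_add _ l, Matrix.cons_val]
    generalize Real.cosh (l / 2 + k * l) = c at *
    generalize Real.sinh (l / 2 + k * l) = s at *
    generalize Real.sqrt (1 + b ^ 2) = a at *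
    rw [hc]
    linear_combination (a ^ 2 * (1 + 2 * Real.sinh (l / 2) ^ 2)) * hu + ha
  refine ⟨h1, ?_⟩
  rw [h1, Real.cosh_two_mul, Real.cosh_sq, Real.sinh_arsinh]
  ring
end
end

section
/- For the regular hyperbolic helical polygon, for every k ∈ ℤ the torsion angle satisfies ((T_{k−1} ∧₋ T_k) ∘₋ (T_k ∧₋ T_{k+1})) / (|T_{k−1} ∧₋ T_k|₀ · |T_k ∧₋ T_{k+1}|₀) = (1 − b² tanh²(l/2)) / (1 + b² tanh²(l/2)) = cos(θ₀), where θ₀ = 2 arctan(b tanh(l/2)) and |v|₀ denotes the (positive) square root of v ∘₋ v; in particular the value is independent of k. -/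
noncomputable section

/-- The Minkowski cross product on ℝ^{1,2} = ℝ³. -/
def mcross (a b : Fin 3 → ℝ) : Fin 3 → ℝ :=
  ![-(a 1 * b 2 - a 2 * b 1), a 2 * b 0 - a 0 * b 2, a 0 * b 1 - a 1 * b 0]

/-- The Minkowski pseudo-norm `|v|₀ = √(v ∘₋ v)` (for space-like vectors). -/
def mnorm (v : Fin 3 → ℝ) : ℝ := Real.sqrt (mdot v v)

/-- The cross product of consecutive tangents, centred at the midpoint parameter `m`. -/
theorem hhp_cross_mid (a b m h : ℝ) :
    mcross ![a * Real.cosh (m - h), a * Real.sinh (m - h), b]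
      ![a * Real.cosh (m + h), a * Real.sinh (m + h), b] =
    ![2 * a * b * Real.sinh h * Real.cosh m, 2 * a * b * Real.sinh h * Real.sinh m,
      2 * a ^ 2 * Real.sinh h * Real.cosh h] := by
  have h1 := Real.cosh_sq m
  ext i
  fin_cases i
  · simp [mcross, Real.cosh_add, Real.sinh_add, Real.cosh_sub, Real.sinh_sub]; ring
  · simp [mcross, Real.cosh_add, Real.sinh_add, Real.cosh_sub, Real.sinh_sub]; ring
  · simp [mcross, Real.cosh_add, Real.sinh_add, Real.cosh_sub, Real.sinh_sub]
    linear_combination (2 * a ^ 2 * Real.sinh h * Real.cosh h) * h1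

theorem hhp_dot_mid (a b m n h : ℝ) :
    mdot ![2 * a * b * Real.sinh h * Real.cosh m, 2 * a * b * Real.sinh h * Real.sinh m,
      2 * a ^ 2 * Real.sinh h * Real.cosh h]
      ![2 * a * b * Real.sinh h * Real.cosh n, 2 * a * b * Real.sinh h * Real.sinh n,
      2 * a ^ 2 * Real.sinh h * Real.cosh h] =
    4 * a ^ 2 * Real.sinh h ^ 2 * (a ^ 2 * Real.cosh h ^ 2 - b ^ 2 * Real.cosh (n - m)) := by
  simp [mdot, Real.cosh_sub]; ring

/-- The torsion angle of the regular hyperbolic helical polygon: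
`((T_{k−1} ∧₋ T_k) ∘₋ (T_k ∧₋ T_{k+1})) / (|T_{k−1} ∧₋ T_k|₀ |T_k ∧₋ T_{k+1}|₀)
 = (1 − b² tanh²(l/2)) / (1 + b² tanh²(l/2)) = cos θ₀`, where
`θ₀ = 2 arctan(b tanh(l/2))`, independently of `k`. -/
theorem hhp_torsion_angle (l b : ℝ) (hl : 0 < l) (hb : 0 < b) :
    ∀ k : ℤ,
      mdot (mcross (hhpT l b (k - 1)) (hhpT l b k)) (mcross (hhpT l b k) (hhpT l b (k + 1))) /
          (mnorm (mcross (hhpT l b (k - 1)) (hhpT l b k)) *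
            mnorm (mcross (hhpT l b k) (hhpT l b (k + 1)))) =
        (1 - b ^ 2 * (Real.tanh (l / 2)) ^ 2) / (1 + b ^ 2 * (Real.tanh (l / 2)) ^ 2) ∧
      mdot (mcross (hhpT l b (k - 1)) (hhpT l b k)) (mcross (hhpT l b k) (hhpT l b (k + 1))) /
          (mnorm (mcross (hhpT l b (k - 1)) (hhpT l b k)) *
            mnorm (mcross (hhpT l b k) (hhpT l b (k + 1)))) =
        Real.cos (2 * Real.arctan (b * Real.tanh (l / 2))) := by
  intro k
  have ha : Real.sqrt (1 + b ^ 2) ^ 2 = 1 + b ^ 2 := Real.sq_sqrt (by positivity)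
  have hs : 0 < Real.sinh (l / 2) := Real.sinh_pos_iff.2 (by linarith)
  have hc : 0 < Real.cosh (l / 2) := Real.cosh_pos _
  have hcs := Real.cosh_sq (l / 2)
  have e1 : hhpT l b (k - 1) = ![Real.sqrt (1 + b ^ 2) * Real.cosh (k * l - l / 2),
      Real.sqrt (1 + b ^ 2) * Real.sinh (k * l - l / 2), b] := by
    have : l / 2 + ((k - 1 : ℤ) : ℝ) * l = k * l - l / 2 := by push_cast; ring
    rw [hhpT, this]
  have e2 : hhpT l b k = ![Real.sqrt (1 + b ^ 2) * Real.cosh (k * l + l / 2),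
      Real.sqrt (1 + b ^ 2) * Real.sinh (k * l + l / 2), b] := by
    rw [hhpT, add_comm (l / 2)]
  have e2' : hhpT l b k = ![Real.sqrt (1 + b ^ 2) * Real.cosh ((k * l + l) - l / 2),
      Real.sqrt (1 + b ^ 2) * Real.sinh ((k * l + l) - l / 2), b] := by
    have : l / 2 + (k : ℝ) * l = (k * l + l) - l / 2 := by ring
    rw [hhpT, this]
  have e3 : hhpT l b (k + 1) = ![Real.sqrt (1 + b ^ 2) * Real.cosh ((k * l + l) + l / 2),
      Real.sqrt (1 + b ^ 2) * Real.sinh ((k * l + l) + l / 2), b] := by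
    have : l / 2 + ((k + 1 : ℤ) : ℝ) * l = (k * l + l) + l / 2 := by push_cast; ring
    rw [hhpT, this]
  have c1 := hhp_cross_mid (Real.sqrt (1 + b ^ 2)) b (k * l) (l / 2)
  have c2 := hhp_cross_mid (Real.sqrt (1 + b ^ 2)) b (k * l + l) (l / 2)
  rw [← e1, ← e2] at c1
  rw [← e2', ← e3] at c2
  have hl2 : Real.cosh l = Real.cosh (l / 2) ^ 2 + Real.sinh (l / 2) ^ 2 := by
    rw [← Real.cosh_two_mul]; congr 1; ring
  have htan : b ^ 2 * Real.tanh (l / 2) ^ 2 = b ^ 2 * Real.sinh (l / 2) ^ 2 / Real.cosh (l / 2) ^ 2 := by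
    rw [Real.tanh_eq_sinh_div_cosh]; ring
  have main : mdot (mcross (hhpT l b (k - 1)) (hhpT l b k)) (mcross (hhpT l b k) (hhpT l b (k + 1))) /
          (mnorm (mcross (hhpT l b (k - 1)) (hhpT l b k)) *
            mnorm (mcross (hhpT l b k) (hhpT l b (k + 1)))) =
        (1 - b ^ 2 * (Real.tanh (l / 2)) ^ 2) / (1 + b ^ 2 * (Real.tanh (l / 2)) ^ 2) := by
    rw [c1, c2, mnorm, mnorm, hhp_dot_mid, hhp_dot_mid, hhp_dot_mid, sub_self, sub_self,
      add_sub_cancel_left, Real.cosh_zero, ha, hl2, htan]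
    have hn : (1 + b ^ 2) * Real.cosh (l / 2) ^ 2 - b ^ 2 * 1 =
        Real.cosh (l / 2) ^ 2 + b ^ 2 * Real.sinh (l / 2) ^ 2 := by
      linear_combination b ^ 2 * hcs
    have hd : (1 + b ^ 2) * Real.cosh (l / 2) ^ 2 -
        b ^ 2 * (Real.cosh (l / 2) ^ 2 + Real.sinh (l / 2) ^ 2) =
        Real.cosh (l / 2) ^ 2 - b ^ 2 * Real.sinh (l / 2) ^ 2 := by ring
    rw [hn, hd, Real.mul_self_sqrt (by positivity)]
    field_simp
  refine ⟨main, main.trans ?_⟩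
  rw [Real.cos_two_mul, Real.cos_sq_arctan]
  have : 0 < 1 + b ^ 2 * Real.tanh (l / 2) ^ 2 := by positivity
  rw [mul_pow]
  field_simp
  ring
end
end

section
/- For every l > 0 and b > 0, setting a = √(1 + b²), the curvature angle ρ₀ = 2 arcsinh(a sinh(l/2)) and the torsion angle θ₀ = 2 arctan(b tanh(l/2)) of the regular hyperbolic helical polygon satisfy the compatibility identity cos(θ₀/2) · cosh(ρ₀/2) = cosh(l/2). -/
noncomputable section

/-- Compatibility between the curvature angle `ρ₀ = 2 arcsinh(a sinh(l/2))`
and the torsion angle `θ₀ = 2 arctan(b tanh(l/2))` of the regular hyperbolic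
helical polygon: `cos(θ₀/2) cosh(ρ₀/2) = cosh(l/2)`. -/
theorem hhp_angle_compatibility (l b : ℝ) (hl : 0 < l) (hb : 0 < b) :
    Real.cos (2 * Real.arctan (b * Real.tanh (l / 2)) / 2) *
      Real.cosh (2 * Real.arsinh (Real.sqrt (1 + b ^ 2) * Real.sinh (l / 2)) / 2) =
    Real.cosh (l / 2) := by
  have hc : 0 < Real.cosh (l / 2) := Real.cosh_pos _
  have hcs := Real.cosh_sq (l / 2)
  have ha : Real.sqrt (1 + b ^ 2) ^ 2 = 1 + b ^ 2 := Real.sq_sqrt (by positivity)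
  have hp : 0 < 1 + (b * Real.tanh (l / 2)) ^ 2 := by positivity
  have key : 1 + (Real.sqrt (1 + b ^ 2) * Real.sinh (l / 2)) ^ 2 =
      Real.cosh (l / 2) ^ 2 * (1 + (b * Real.tanh (l / 2)) ^ 2) := by
    rw [mul_pow, ha, Real.tanh_eq_sinh_div_cosh]
    field_simp
    rw [hcs]
    ring
  rw [mul_div_cancel_left₀ _ (two_ne_zero), mul_div_cancel_left₀ _ (two_ne_zero),
    Real.cos_arctan, Real.cosh_arsinh, key, Real.sqrt_mul (sq_nonneg _), Real.sqrt_sq hc.le]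
  have := (Real.sqrt_pos.mpr hp).ne'
  field_simp
end
end

section
/- For the regular circular helical polygon, for every k ∈ ℤ the torsion angle satisfies ((T_{k−1} ∧₋ T_k) ∘₋ (T_k ∧₋ T_{k+1})) / (|T_{k−1} ∧₋ T_k|₀ · |T_k ∧₋ T_{k+1}|₀) = (1 − b² tan²(π/M)) / (1 + b² tan²(π/M)) = cos(θ₀), where θ₀ = 2 arctan(b tan(π/M)) and |v|₀ denotes the (positive) square root of v ∘₋ v; in particular the value is independent of k. -/
noncomputable section

open Real

/-- Tangent vectors of the regular circular helical polygon with `M` sides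
and torsion parameter `b` (with `a = √(b² − 1)`). -/
def chpT (M : ℕ) (b : ℝ) (k : ℤ) : Fin 3 → ℝ :=
  ![b, Real.sqrt (b ^ 2 - 1) * Real.cos (2 * π * k / M),
    Real.sqrt (b ^ 2 - 1) * Real.sin (2 * π * k / M)]

/-- The torsion angle of the regular circular helical polygon:
`((T_{k−1} ∧₋ T_k) ∘₋ (T_k ∧₋ T_{k+1})) / (|T_{k−1} ∧₋ T_k|₀ |T_k ∧₋ T_{k+1}|₀)
 = (1 − b² tan²(π/M)) / (1 + b² tan²(π/M)) = cos θ₀`, where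
`θ₀ = 2 arctan(b tan(π/M))`, independently of `k`. -/
theorem chp_torsion_angle (M : ℕ) (hM : 3 ≤ M) (b : ℝ) (hb : 1 < b) :
    ∀ k : ℤ,
      mdot (mcross (chpT M b (k - 1)) (chpT M b k)) (mcross (chpT M b k) (chpT M b (k + 1))) /
          (mnorm (mcross (chpT M b (k - 1)) (chpT M b k)) *
            mnorm (mcross (chpT M b k) (chpT M b (k + 1)))) =
        (1 - b ^ 2 * (Real.tan (π / M)) ^ 2) / (1 + b ^ 2 * (Real.tan (π / M)) ^ 2) ∧
      mdot (mcross (chpT M b (k - 1)) (chpT M b k)) (mcross (chpT M b k) (chpT M b (k + 1))) /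
          (mnorm (mcross (chpT M b (k - 1)) (chpT M b k)) *
            mnorm (mcross (chpT M b k) (chpT M b (k + 1)))) =
        Real.cos (2 * Real.arctan (b * Real.tan (π / M))) := by
  intro k
  have hM0 : (M : ℝ) ≠ 0 := by
    have : M ≠ 0 := by omega
    exact_mod_cast this
  have hM3 : (3 : ℝ) ≤ M := by exact_mod_cast hM
  have hpos : 0 < π / M := div_pos pi_pos (by linarith)
  have hlt : π / M < π / 2 := div_lt_div_of_pos_left pi_pos (by norm_num) (by linarith)
  have hs : 0 < sin (π / M) := sin_pos_of_pos_of_lt_pi hpos (by linarith [pi_pos])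
  have hc : 0 < cos (π / M) := cos_pos_of_mem_Ioo ⟨by linarith, hlt⟩
  have hsc := sin_sq_add_cos_sq (π / M)
  have e1 : 2 * π * ((k - 1 : ℤ) : ℝ) / M = 2 * π * k / M - 2 * (π / M) := by
    push_cast; ring
  have e2 : 2 * π * ((k + 1 : ℤ) : ℝ) / M = 2 * π * k / M + 2 * (π / M) := by
    push_cast; ring
  have ha : sqrt (b ^ 2 - 1) ^ 2 = b ^ 2 - 1 := sq_sqrt (by nlinarith)
  have hX := sin_sq_add_cos_sq (2 * π * k / M)
  have hp : cos (2 * (π / M)) = cos (π / M) ^ 2 - sin (π / M) ^ 2 := by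
    rw [cos_two_mul]; linear_combination hsc
  have hq := sin_two_mul (π / M)
  rw [tan_eq_sin_div_cos]
  have key : mdot (mcross (chpT M b (k - 1)) (chpT M b k))
      (mcross (chpT M b k) (chpT M b (k + 1))) = 4 * (b ^ 2 - 1) * sin (π / M) ^ 2 *
        (cos (π / M) ^ 2 - b ^ 2 * sin (π / M) ^ 2) ∧
      mdot (mcross (chpT M b (k - 1)) (chpT M b k))
      (mcross (chpT M b (k - 1)) (chpT M b k)) = 4 * (b ^ 2 - 1) * sin (π / M) ^ 2 *
        (cos (π / M) ^ 2 + b ^ 2 * sin (π / M) ^ 2) ∧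
      mdot (mcross (chpT M b k) (chpT M b (k + 1)))
      (mcross (chpT M b k) (chpT M b (k + 1))) = 4 * (b ^ 2 - 1) * sin (π / M) ^ 2 *
        (cos (π / M) ^ 2 + b ^ 2 * sin (π / M) ^ 2) := by
    simp only [mdot, mcross, chpT, e1, e2, cos_sub, cos_add, sin_sub, sin_add,
      Matrix.cons_val_zero, Matrix.cons_val_one, Matrix.cons_val]
    generalize sqrt (b ^ 2 - 1) = a at *
    have h1 : a ^ 2 * (b ^ 2 * ((cos (2 * (π / M)) - 1) ^ 2 + sin (2 * (π / M)) ^ 2)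
        - a ^ 2 * sin (2 * (π / M)) ^ 2) = 4 * (b ^ 2 - 1) * sin (π / M) ^ 2 *
        (cos (π / M) ^ 2 + b ^ 2 * sin (π / M) ^ 2) := by
      rw [hp, hq, ha]
      have : cos (π / M) ^ 2 = 1 - sin (π / M) ^ 2 := by linarith
      simp only [mul_pow, this]; ring
    have h2 : a ^ 2 * (-b ^ 2 * ((cos (2 * (π / M)) - 1) ^ 2 - sin (2 * (π / M)) ^ 2)
        - a ^ 2 * sin (2 * (π / M)) ^ 2) = 4 * (b ^ 2 - 1) * sin (π / M) ^ 2 *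
        (cos (π / M) ^ 2 - b ^ 2 * sin (π / M) ^ 2) := by
      rw [hp, hq, ha]
      have : cos (π / M) ^ 2 = 1 - sin (π / M) ^ 2 := by linarith
      simp only [mul_pow, this]; ring
    clear hp hq
    generalize cos (2 * (π / M)) = p at *
    generalize sin (2 * (π / M)) = q at *
    generalize cos (2 * π * k / M) = C at *
    generalize sin (2 * π * k / M) = S at *
    refine ⟨?_, ?_, ?_⟩
    · rw [← h2]
      linear_combination (-a ^ 4 * q ^ 2 * (S ^ 2 + C ^ 2 + 1)
        - a ^ 2 * b ^ 2 * ((p - 1) ^ 2 - q ^ 2)) * hX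
    · rw [← h1]
      linear_combination (-a ^ 4 * q ^ 2 * (S ^ 2 + C ^ 2 + 1)
        + a ^ 2 * b ^ 2 * ((p - 1) ^ 2 + q ^ 2)) * hX
    · rw [← h1]
      linear_combination (-a ^ 4 * q ^ 2 * (S ^ 2 + C ^ 2 + 1)
        + a ^ 2 * b ^ 2 * ((p - 1) ^ 2 + q ^ 2)) * hX
  obtain ⟨k1, k2, k3⟩ := key
  have hb2 : 0 < b ^ 2 - 1 := by nlinarith
  have main : mdot (mcross (chpT M b (k - 1)) (chpT M b k))
      (mcross (chpT M b k) (chpT M b (k + 1))) /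
          (mnorm (mcross (chpT M b (k - 1)) (chpT M b k)) *
            mnorm (mcross (chpT M b k) (chpT M b (k + 1)))) =
      (1 - b ^ 2 * (sin (π / M) / cos (π / M)) ^ 2) /
        (1 + b ^ 2 * (sin (π / M) / cos (π / M)) ^ 2) := by
    rw [mnorm, mnorm, k1, k2, k3, mul_self_sqrt (by positivity),
      mul_div_mul_left _ _ (by positivity)]
    have hd : cos (π / M) ^ 2 + b ^ 2 * sin (π / M) ^ 2 ≠ 0 := by positivity
    have hd2 : 1 + b ^ 2 * (sin (π / M) / cos (π / M)) ^ 2 ≠ 0 := by positivity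
    rw [div_eq_div_iff hd hd2]
    field_simp
  refine ⟨main, main.trans ?_⟩
  have hd2 : 1 + (b * (sin (π / M) / cos (π / M))) ^ 2 ≠ 0 := by positivity
  rw [cos_two_mul, cos_sq_arctan, ← mul_pow]
  field_simp
  ring
end
end

section
/- For the regular hyperbolic helical polygon, for every k ∈ ℤ the vector T_k ∧₋ T_{k+1} is space-like: |T_k ∧₋ T_{k+1}|₀² = sinh²(ρ₀) > 0, where ρ₀ = 2 arcsinh(a sinh(l/2)). -/
noncomputable section

/-- For the regular hyperbolic helical polygon, `T_k ∧₋ T_{k+1}` is space-like: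
`|T_k ∧₋ T_{k+1}|₀² = sinh²(ρ₀) > 0`, with `ρ₀ = 2 arcsinh(a sinh(l/2))`. -/
theorem hhp_binormal_spacelike (l b : ℝ) (hl : 0 < l) (hb : 0 < b) :
    ∀ k : ℤ,
      mdot (mcross (hhpT l b k) (hhpT l b (k + 1))) (mcross (hhpT l b k) (hhpT l b (k + 1))) =
        (Real.sinh (2 * Real.arsinh (Real.sqrt (1 + b ^ 2) * Real.sinh (l / 2)))) ^ 2 ∧
      0 < mdot (mcross (hhpT l b k) (hhpT l b (k + 1)))
            (mcross (hhpT l b k) (hhpT l b (k + 1))) := by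
  intro k
  have lag : ∀ x y : Fin 3 → ℝ, mdot (mcross x y) (mcross x y) =
      (mdot x y) ^ 2 - mdot x x * mdot y y := by
    intro x y
    simp [mdot, mcross]
    ring
  have ha : Real.sqrt (1 + b ^ 2) ^ 2 = 1 + b ^ 2 := Real.sq_sqrt (by positivity)
  have ha0 : 0 < Real.sqrt (1 + b ^ 2) := Real.sqrt_pos.mpr (by positivity)
  have hS : 0 < Real.sinh (l / 2) := Real.sinh_pos_iff.mpr (by linarith)
  have hself : ∀ j : ℤ, mdot (hhpT l b j) (hhpT l b j) = -1 := by
    intro j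
    have h := Real.cosh_sq (l / 2 + j * l)
    simp [mdot, hhpT]
    linear_combination (-Real.sqrt (1 + b ^ 2) ^ 2) * h - ha
  have hcosh : Real.cosh l = 1 + 2 * Real.sinh (l / 2) ^ 2 := by
    have h1 := Real.cosh_two_mul (l / 2)
    rw [show 2 * (l / 2) = l by ring] at h1
    have h2 := Real.cosh_sq (l / 2)
    linarith
  have hdot : mdot (hhpT l b k) (hhpT l b (k + 1)) =
      -(1 + 2 * (Real.sqrt (1 + b ^ 2) * Real.sinh (l / 2)) ^ 2) := by
    have h := Real.cosh_sub (l / 2 + (k + 1) * l) (l / 2 + k * l)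
    rw [show l / 2 + ((k : ℝ) + 1) * l - (l / 2 + k * l) = l by ring] at h
    simp [mdot, hhpT]
    linear_combination Real.sqrt (1 + b ^ 2) ^ 2 * h -
      Real.sqrt (1 + b ^ 2) ^ 2 * hcosh - ha
  have key := lag (hhpT l b k) (hhpT l b (k + 1))
  rw [hself, hself, hdot] at key
  have hp := mul_pos ha0 hS
  rw [key]
  generalize Real.sqrt (1 + b ^ 2) * Real.sinh (l / 2) = S at hp
  constructor
  · have hc := Real.cosh_sq (Real.arsinh S)
    rw [Real.sinh_two_mul, mul_pow, hc, Real.sinh_arsinh]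
    ring
  · have : 0 < 4 * S ^ 2 + 4 * S ^ 4 := by positivity
    linarith
end
end

section
/- For the regular circular helical polygon, for every k ∈ ℤ the vector T_k ∧₋ T_{k+1} is space-like: |T_k ∧₋ T_{k+1}|₀² = sinh²(ρ₀) > 0, where ρ₀ = 2 arcsinh(a sin(π/M)). -/
noncomputable section

open Real

theorem mdot_mcross_self (u v : Fin 3 → ℝ) :
    mdot (mcross u v) (mcross u v) = mdot u v ^ 2 - mdot u u * mdot v v := by
  simp only [mdot, mcross, Matrix.cons_val]
  ring

theorem chpT_self (M : ℕ) (b : ℝ) (hb : 1 < b) (k : ℤ) : mdot (chpT M b k) (chpT M b k) = -1 := by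
  have h : √(b ^ 2 - 1) ^ 2 = b ^ 2 - 1 := Real.sq_sqrt (by nlinarith)
  have h2 := Real.sin_sq_add_cos_sq (2 * π * k / M)
  simp only [mdot, chpT, Matrix.cons_val]
  linear_combination √(b ^ 2 - 1) ^ 2 * h2 + h

theorem chpT_succ (M : ℕ) (b : ℝ) (hb : 1 < b) (k : ℤ) :
    mdot (chpT M b k) (chpT M b (k + 1)) = -(1 + 2 * (√(b ^ 2 - 1) * sin (π / M)) ^ 2) := by
  have h : √(b ^ 2 - 1) ^ 2 = b ^ 2 - 1 := Real.sq_sqrt (by nlinarith)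
  have h2 := Real.cos_sub (2 * π * (k + 1 : ℤ) / M) (2 * π * k / M)
  have e : 2 * π * (k + 1 : ℤ) / M - 2 * π * k / M = 2 * (π / M) := by
    push_cast
    ring
  rw [e, Real.cos_two_mul] at h2
  have h3 := Real.sin_sq_add_cos_sq (π / M)
  simp only [mdot, chpT, Matrix.cons_val]
  linear_combination -√(b ^ 2 - 1) ^ 2 * h2 + 2 * √(b ^ 2 - 1) ^ 2 * h3 + h

/-- For the regular circular helical polygon, `T_k ∧₋ T_{k+1}` is space-like:
`|T_k ∧₋ T_{k+1}|₀² = sinh²(ρ₀) > 0`, with `ρ₀ = 2 arcsinh(a sin(π/M))`. -/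
theorem chp_binormal_spacelike (M : ℕ) (hM : 3 ≤ M) (b : ℝ) (hb : 1 < b) :
    ∀ k : ℤ,
      mdot (mcross (chpT M b k) (chpT M b (k + 1))) (mcross (chpT M b k) (chpT M b (k + 1))) =
        (Real.sinh (2 * Real.arsinh (Real.sqrt (b ^ 2 - 1) * Real.sin (π / M)))) ^ 2 ∧
      0 < mdot (mcross (chpT M b k) (chpT M b (k + 1)))
            (mcross (chpT M b k) (chpT M b (k + 1))) := by
  intro k
  rw [mdot_mcross_self, chpT_self M b hb, chpT_self M b hb, chpT_succ M b hb]
  have ha : 0 < √(b ^ 2 - 1) := Real.sqrt_pos.mpr (by nlinarith)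
  have hM' : (3 : ℝ) ≤ M := by exact_mod_cast hM
  have hs : 0 < sin (π / M) := by
    apply Real.sin_pos_of_pos_of_lt_pi
    · positivity
    · exact div_lt_self Real.pi_pos (by linarith)
  have hp := mul_pos ha hs
  generalize √(b ^ 2 - 1) * sin (π / M) = s at hp
  constructor
  · have hc := Real.cosh_sq (arsinh s)
    rw [Real.sinh_arsinh] at hc
    rw [Real.sinh_two_mul, Real.sinh_arsinh]
    linear_combination -4 * s ^ 2 * hc
  · have : 0 < s ^ 2 := by positivity
    nlinarith
end
end

section
/- For the regular hyperbolic helical polygon with l > 0 and b > 0, for every k ∈ ℤ the strict inequality (T_{k−1} ∧₋ T_k) ∘₋ (T_k ∧₋ T_{k+1}) < |T_{k−1} ∧₋ T_k|₀ · |T_k ∧₋ T_{k+1}|₀ holds, where |v|₀ denotes the (positive) square root of v ∘₋ v; consequently the angle between consecutive binormal directions is space-like. -/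
noncomputable section

/-- For the regular hyperbolic helical polygon, the strict inequality
`(T_{k−1} ∧₋ T_k) ∘₋ (T_k ∧₋ T_{k+1}) < |T_{k−1} ∧₋ T_k|₀ |T_k ∧₋ T_{k+1}|₀`
holds, so the angle between consecutive binormal directions is space-like. -/
theorem hhp_binormal_angle_spacelike (l b : ℝ) (hl : 0 < l) (hb : 0 < b) :
    ∀ k : ℤ,
      mdot (mcross (hhpT l b (k - 1)) (hhpT l b k)) (mcross (hhpT l b k) (hhpT l b (k + 1))) <
        mnorm (mcross (hhpT l b (k - 1)) (hhpT l b k)) *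
          mnorm (mcross (hhpT l b k) (hhpT l b (k + 1))) := by
  intro k
  have hk1 : l / 2 + ((k - 1 : ℤ) : ℝ) * l = (l / 2 + k * l) - l := by push_cast; ring
  have hk2 : l / 2 + ((k + 1 : ℤ) : ℝ) * l = (l / 2 + k * l) + l := by push_cast; ring
  have hA : Real.sqrt (1 + b ^ 2) ^ 2 = 1 + b ^ 2 := Real.sq_sqrt (by positivity)
  have hc : 1 < Real.cosh l := Real.one_lt_cosh.mpr hl.ne'
  have hcs := Real.cosh_sq l
  have hCS := Real.cosh_sq (l / 2 + k * l)
  unfold mnorm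
  simp only [hhpT, hk1, hk2]
  clear hk1 hk2
  generalize l / 2 + (k : ℝ) * l = x at *
  simp only [Real.cosh_add, Real.sinh_add, Real.cosh_sub, Real.sinh_sub]
  generalize Real.cosh x = C at *
  generalize Real.sinh x = S at *
  generalize Real.cosh l = c at *
  generalize Real.sinh l = s at *
  generalize Real.sqrt (1 + b ^ 2) = A at *
  have hS : S ^ 2 = C ^ 2 - 1 := by linarith
  have hs : s ^ 2 = c ^ 2 - 1 := by linarith
  have hApos : 0 < A ^ 2 := by rw [hA]; positivity
  have e1 : mdot (mcross ![A * (C * c - S * s), A * (S * c - C * s), b] ![A * C, A * S, b])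
      (mcross ![A * (C * c - S * s), A * (S * c - C * s), b] ![A * C, A * S, b])
      = A ^ 2 * b ^ 2 * (2 - 2 * c) + A ^ 4 * (c ^ 2 - 1) := by
    simp [mdot, mcross]
    grind
  have e2 : mdot (mcross ![A * C, A * S, b] ![A * (C * c + S * s), A * (S * c + C * s), b])
      (mcross ![A * C, A * S, b] ![A * (C * c + S * s), A * (S * c + C * s), b])
      = A ^ 2 * b ^ 2 * (2 - 2 * c) + A ^ 4 * (c ^ 2 - 1) := by
    simp [mdot, mcross]
    grind
  have e3 : mdot (mcross ![A * (C * c - S * s), A * (S * c - C * s), b] ![A * C, A * S, b])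
      (mcross ![A * C, A * S, b] ![A * (C * c + S * s), A * (S * c + C * s), b])
      = A ^ 2 * b ^ 2 * (2 * c - 2 * c ^ 2) + A ^ 4 * (c ^ 2 - 1) := by
    simp [mdot, mcross]
    grind
  have hc1 : 0 < c - 1 := by linarith
  have e4 : A ^ 2 * b ^ 2 * (2 - 2 * c) + A ^ 4 * (c ^ 2 - 1)
      = A ^ 2 * (c - 1) * (A ^ 2 * (c - 1) + 2) := by
    have : b ^ 2 = A ^ 2 - 1 := by linarith
    rw [this]; ring
  have h4 : 0 ≤ A ^ 2 * b ^ 2 * (2 - 2 * c) + A ^ 4 * (c ^ 2 - 1) := by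
    rw [e4]; positivity
  rw [e1, e2, e3, Real.mul_self_sqrt h4]
  have : 0 < A ^ 2 * b ^ 2 * (2 * (c - 1) ^ 2) := by positivity
  linarith
end
end
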